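/- arXiv:1301.4616 — 7 statements merged into one kernel-verified Lean document; each statement's English description precedes it below -/
import Mathlib

section
/- Let G be a group, H and K subgroups of G, and g ∈ G. In the comma category C = Comma (B ι_K) (B ι_H) of the functors induced by the inclusions ι_K : K →* G and ι_H : H →* G (objects: elements of G; morphisms g ⟶ g': pairs (k, h) ∈ K × H with g' = h * g * k⁻¹), the automorphism group of the object g is isomorphic, via the map (k, h) ↦ h, to the subgroup H ⊓ g K g⁻¹ of G, where g K g⁻¹ = Subgroup.map ((MulAut.conj g).toMonoidHom) K. -/
/-!
For homomorphisms `φ : K →* G` and `ψ : H →* G`, an endomorphism of the object `g` of the comma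
category of `Bφ` and `Bψ` is a pair `(k, h)` with `g * φ k = ψ h * g`, i.e. `ψ h = g * φ k * g⁻¹`.
The values `ψ h` so obtained are exactly the elements of `ψ.range ⊓ g φ.range g⁻¹`, and `ψ h`
determines `(k, h)` when `φ` and `ψ` are injective.
-/

open CategoryTheory

/-- The object of the comma category `Comma (B ι_K) (B ι_H)` (the homotopy fibered
product `K ×_G H`) corresponding to an element `g : G`. -/
def dosetCommaObj {G : Type*} [Group G] (H K : Subgroup G) (g : G) :
    Comma (SingleObj.mapHom K G K.subtype) (SingleObj.mapHom H G H.subtype) where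
  left := SingleObj.star K
  right := SingleObj.star H
  hom := g

theorem commaHom_ext_right {A B T : Type*} [Category* A] [Category* B] [Category* T]
    {L : A ⥤ T} {R : B ⥤ T} [L.Faithful] {X Y : Comma L R} [Mono Y.hom] {f f' : X ⟶ Y}
    (h : f.right = f'.right) : f = f' := by
  have h_left : L.map f.left ≫ Y.hom = L.map f'.left ≫ Y.hom := by rw [f.w, f'.w, h]
  exact Comma.hom_ext _ _ (L.map_injective ((cancel_mono Y.hom).mp h_left)) h

theorem faithful_mapHom {M N : Type*} [Monoid M] [Monoid N] {φ : M →* N}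
    (hφ : Function.Injective φ) : (SingleObj.mapHom M N φ).Faithful where
  map_injective h := hφ h

section

variable {G H K : Type*} [Group G] [Group H] [Group K] {φ : K →* G} {ψ : H →* G}
  (X : Comma (SingleObj.mapHom K G φ) (SingleObj.mapHom H G ψ))

/-- The projection `(k, h) ↦ h` from the automorphisms of an object of the comma category. It is a
homomorphism, not an antihomomorphism, because composition in `SingleObj` and multiplication in
`Aut` both reverse the order of the factors. -/
def autRight : Aut X →* H where
  toFun α := α.hom.right
  map_one' := rfl
  map_mul' _ _ := rfl

theorem autRight_injective (hφ : Function.Injective φ) : Function.Injective (autRight X) :=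
  fun _ _ h =>
    have := faithful_mapHom hφ
    Iso.ext (commaHom_ext_right h)

theorem range_autRight :
    (autRight X).range = (φ.range.map (MulAut.conj (G := G) X.hom).toMonoidHom).comap ψ := by
  ext h
  suffices (∃ α, autRight X α = h) ↔ ∃ k : K, MulAut.conj (G := G) X.hom (φ k) = ψ h by simpa
  simp only [MulAut.conj_apply, mul_inv_eq_iff_eq_mul]
  constructor
  · rintro ⟨α, rfl⟩
    exact ⟨α.hom.left, α.hom.w⟩
  · rintro ⟨k, hk⟩
    let isoK : X.left ≅ X.left := (Groupoid.isoEquivHom _ _).symm k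
    let isoH : X.right ≅ X.right := (Groupoid.isoEquivHom _ _).symm h
    exact ⟨Comma.isoMk isoK isoH hk, rfl⟩

theorem range_comp_autRight :
    (ψ.comp (autRight X)).range =
      ψ.range ⊓ φ.range.map (MulAut.conj (G := G) X.hom).toMonoidHom := by
  rw [MonoidHom.range_comp, range_autRight, Subgroup.map_comap_eq]

theorem aut_dosetCommaObj_mulEquiv_general (hφ : Function.Injective φ)
    (hψ : Function.Injective ψ) :
    ∃ e : Aut X ≃* ↥(ψ.range ⊓ φ.range.map (MulAut.conj (G := G) X.hom).toMonoidHom),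
      ∀ α : Aut X, (e α : G) = ψ α.hom.right :=
  have h_inj : Function.Injective (ψ.comp (autRight X)) := hψ.comp (autRight_injective X hφ)
  ⟨(MonoidHom.ofInjective h_inj).trans (MulEquiv.subgroupCongr (range_comp_autRight X)),
    fun _ => rfl⟩

end

/-- In the homotopy fibered product `K ×_G H` of the inclusions of two subgroups
`K, H ≤ G`, the automorphism group of the object corresponding to `g : G` is
isomorphic, via the map `(k, h) ↦ h`, to the subgroup `H ⊓ gKg⁻¹` of `G`. -/
theorem aut_dosetCommaObj_mulEquiv {G : Type*} [Group G] (H K : Subgroup G) (g : G) :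
    ∃ e : Aut (dosetCommaObj H K g) ≃*
        ↥(H ⊓ Subgroup.map (MulAut.conj g).toMonoidHom K),
      ∀ φ : Aut (dosetCommaObj H K g), (e φ : G) = H.subtype φ.hom.right := by
  have h := aut_dosetCommaObj_mulEquiv_general (dosetCommaObj H K g)
    K.subtype_injective H.subtype_injective
  rwa [H.range_subtype, K.range_subtype] at h
end

section
/- Let α : H →* G and β : K →* G be surjective group homomorphisms between groups. Then the comma category Comma (B α) (B β) — whose objects are the elements of G and whose morphisms g ⟶ g' are pairs (h, k) ∈ H × K with g' = β(k) * g * α(h)⁻¹ — is equivalent to SingleObj L, where L is the pullback group L = {(h, k) : H × K // α h = β k}, a subgroup of H × K. (The homotopy fibered product of two surjections of groups is equivalent to the group pullback.) -/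
/-!
A category all of whose objects are isomorphic to `X` is equivalent to the one-object category on
`End X`. In `Comma (B α) (B β)` the endomorphisms of `1 : G` are the pairs `(h, k)` with
`α h = β k`, and a factorization `g = β k * α h` gives an isomorphism `(h⁻¹, k) : 1 ≅ g`.
-/

open CategoryTheory

/-- The pullback group of two homomorphisms `α : H →* G`, `β : K →* G`: the subgroup
`{(h, k) : H × K // α h = β k}` of `H × K`. -/
def pullbackSubgroup {H K G : Type*} [Group H] [Group K] [Group G]
    (α : H →* G) (β : K →* G) : Subgroup (H × K) where
  carrier := {p | α p.1 = β p.2}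
  one_mem' := by simp
  mul_mem' := by
    intro a b ha hb
    simp only [Set.mem_setOf_eq, Prod.fst_mul, Prod.snd_mul, map_mul] at *
    rw [ha, hb]
  inv_mem' := by
    intro a ha
    simp only [Set.mem_setOf_eq, Prod.fst_inv, Prod.snd_inv, map_inv] at *
    rw [ha]

theorem isEquivalence_singleObj_functor {M C : Type*} [Monoid M] [Category C] {X : C}
    {f : M →* End X} (hf : Function.Bijective f) (hX : ∀ Y : C, Nonempty (X ≅ Y)) :
    (SingleObj.functor f).IsEquivalence where
  faithful := ⟨fun h => hf.injective h⟩
  full := ⟨fun g => hf.surjective g⟩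
  essSurj := ⟨fun Y => ⟨SingleObj.star M, hX Y⟩⟩

section Comma

variable {H K G : Type*}

/-- The object of `Comma (B α) (B β)` given by the identity of `G`, serving as its base point. -/
def commaOne [Monoid H] [Monoid K] [Monoid G] (α : H →* G) (β : K →* G) :
    Comma (SingleObj.mapHom H G α) (SingleObj.mapHom K G β) where
  left := SingleObj.star H
  right := SingleObj.star K
  hom := (1 : G)

theorem nonempty_comma_iso_of_mul_eq_mul [Group H] [Group K] [Monoid G] {α : H →* G} {β : K →* G}
    {X Y : Comma (SingleObj.mapHom H G α) (SingleObj.mapHom K G β)} {h : H} {k : K}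
    (w : (Y.hom : G) * α h = β k * X.hom) : Nonempty (X ≅ Y) :=
  let l : X.left ≅ Y.left := (Groupoid.isoEquivHom _ _).symm h
  let r : X.right ≅ Y.right := (Groupoid.isoEquivHom _ _).symm k
  ⟨Comma.isoMk l r w⟩

variable [Group H] [Group K] [Group G] (α : H →* G) (β : K →* G)

/-- The pullback group as the endomorphism monoid of `1 : G` in `Comma (B α) (B β)`. No opposite
is needed, since composition in `SingleObj` and multiplication in `End` are both reversed. -/
def pullbackMulEquivEndCommaOne : pullbackSubgroup α β ≃* End (commaOne α β) where
  toFun p :=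
    { left := p.1.1
      right := p.1.2
      w := show (1 : G) * α p.1.1 = β p.1.2 * 1 by
        rw [one_mul, mul_one]
        exact p.2 }
  invFun f := ⟨(f.left, f.right), by
    have w : (1 : G) * α f.left = β f.right * 1 := f.w
    rwa [one_mul, mul_one] at w⟩
  left_inv _ := rfl
  right_inv _ := rfl
  map_mul' _ _ := rfl

theorem comma_of_surjections_equiv_pullback_general (hG : ∀ g : G, ∃ k h, β k * α h = g) :
    Nonempty (Comma (SingleObj.mapHom H G α) (SingleObj.mapHom K G β) ≌
      SingleObj ↥(pullbackSubgroup α β)) := by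
  let e := pullbackMulEquivEndCommaOne α β
  have iso_commaOne (Y : Comma (SingleObj.mapHom H G α) (SingleObj.mapHom K G β)) :
      Nonempty (commaOne α β ≅ Y) := by
    obtain ⟨k, h, hY⟩ := hG Y.hom
    have w : (Y.hom : G) * α h⁻¹ = β k * 1 := by
      rw [← hY, map_inv, mul_inv_cancel_right, mul_one]
    exact nonempty_comma_iso_of_mul_eq_mul w
  have := isEquivalence_singleObj_functor (f := e.toMonoidHom) e.bijective iso_commaOne
  exact ⟨(SingleObj.functor e.toMonoidHom).asEquivalence.symm⟩

end Comma

/-- The homotopy fibered product of two surjections of groups `α : H ↠ G`, `β : K ↠ G`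
(realized as the comma category `Comma (B α) (B β)`) is equivalent to the one-object
groupoid on the pullback group `L = {(h, k) : H × K // α h = β k}`. -/
theorem comma_of_surjections_equiv_pullback {H K G : Type*} [Group H] [Group K] [Group G]
    (α : H →* G) (β : K →* G) (hα : Function.Surjective α) (hβ : Function.Surjective β) :
    Nonempty (Comma (SingleObj.mapHom H G α) (SingleObj.mapHom K G β) ≌
      SingleObj ↥(pullbackSubgroup α β)) :=
  comma_of_surjections_equiv_pullback_general α β fun g =>
    (hβ g).imp fun k hk => ⟨1, by rw [map_one, mul_one, hk]⟩
end

section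
/- Let R be a commutative ring, ι a finite type, A : Matrix ι ι R, n : ℕ, and σ a permutation of Fin n. Then ∑_{j : Fin n → ι} ∏_{i : Fin n} A (j (σ i)) (j i) = (Matrix.trace A) ^ (n - σ.support.card) * ((σ.cycleType).map (fun k => Matrix.trace (A ^ k))).prod. (The left-hand side is the trace of the wreath-product element (σ; g, …, g) acting on the n-th tensor power of a representation in which g acts by the matrix A — first g acting in every tensor factor, then σ permuting the factors — and the right-hand side is the product, over the cycles of σ, of the traces of the corresponding powers of A, fixed points of σ each contributing a factor Matrix.trace A.) -/
/-!
Grouping the factors of `∏ i, A (j (σ i)) (j i)` along the cycles of `σ` splits the sum over `j`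
into a product of independent sums, one for each nontrivial cycle and one for the set of fixed
points. On the fixed points the sum is a power of `∑ x, A x x`. On a cycle of length `k` it runs
over the closed walks of length `k` in `ι`, each weighted by the product of the entries of `A`
along it, so it is the trace of `A ^ k`.
-/

open Equiv Equiv.Perm Finset

section TensorPowerTrace

variable {R : Type*} [CommSemiring R] {ι : Type*} [Fintype ι]

section Basic

variable {α β : Type*} [Fintype α] [DecidableEq α] [Fintype β] [DecidableEq β]

/-- The trace of the operator on the tensor power indexed by `α` that applies the matrix `A` in
every factor and then permutes the factors by `σ`, computed in the standard basis, whose elements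
are indexed by the functions `α → ι`. An arbitrary finite `α` allows restricting `σ` to the
unions of its cycles. -/
def tensorPowerTrace (A : Matrix ι ι R) (σ : Perm α) : R :=
  ∑ j : α → ι, ∏ i : α, A (j (σ i)) (j i)

lemma tensorPowerTrace_congr (A : Matrix ι ι R) {σ : Perm α} {τ : Perm β} (e : α ≃ β)
    (h : ∀ x, e (σ x) = τ (e x)) : tensorPowerTrace A σ = tensorPowerTrace A τ := by
  refine Fintype.sum_equiv (e.arrowCongr (Equiv.refl ι)) _ _ fun j ↦ ?_
  refine Fintype.prod_equiv e _ _ fun i ↦ ?_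
  simp [← h]

lemma tensorPowerTrace_of_isEmpty [IsEmpty α] (A : Matrix ι ι R) (σ : Perm α) :
    tensorPowerTrace A σ = 1 := by
  simp [tensorPowerTrace]

lemma tensorPowerTrace_one (A : Matrix ι ι R) :
    tensorPowerTrace A (1 : Perm α) = A.trace ^ Fintype.card α :=
  calc ∑ j : α → ι, ∏ i, A (j i) (j i) = ∏ _i : α, ∑ x, A x x :=
        (Fintype.prod_sum fun _ x ↦ A x x).symm
    _ = A.trace ^ Fintype.card α := prod_const _

lemma tensorPowerTrace_eq_prod_fiber {κ : Type*} [Fintype κ] [DecidableEq κ] (A : Matrix ι ι R)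
    (σ : Perm α) (f : α → κ) (h : ∀ x, f (σ x) = f x) :
    tensorPowerTrace A σ =
      ∏ k, tensorPowerTrace A (σ.subtypePerm (p := (f · = k)) fun x ↦ by rw [h x]) := by
  let e : (α → ι) ≃ ∀ k, {x // f x = k} → ι :=
    ((sigmaFiberEquiv f).symm.arrowCongr (Equiv.refl ι)).trans (piCurry fun _ _ ↦ ι)
  simp only [tensorPowerTrace, Fintype.prod_sum]
  refine Fintype.sum_equiv e _ _ fun j ↦ ?_
  exact (Fintype.prod_fiberwise f fun i ↦ A (j (σ i)) (j i)).symm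

end Basic

section Cycle

variable [DecidableEq ι]

/-- The matrix `B` closes up the walk; leaving it free lets the induction on `k` absorb the first
step of the walk into it. -/
lemma sum_walk_eq_trace_mul_pow (A B : Matrix ι ι R) (k : ℕ) :
    ∑ j : Fin (k + 1) → ι, B (j 0) (j (Fin.last k)) * ∏ i : Fin k, A (j i.succ) (j i.castSucc) =
      (B * A ^ k).trace := by
  induction k generalizing B with
  | zero =>
    rw [pow_zero, mul_one]
    exact Fintype.sum_equiv (funUnique (Fin 1) ι) _ _ fun j ↦ by simp
  | succ k ih =>
    rw [pow_succ, ← mul_assoc, Matrix.trace_mul_comm, ← mul_assoc, ← ih,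
      ← (Fin.consEquiv fun _ : Fin (k + 2) ↦ ι).sum_comp, Fintype.sum_prod_type_right]
    refine sum_congr rfl fun j _ ↦ ?_
    rw [Matrix.mul_apply, sum_mul]
    refine sum_congr rfl fun x _ ↦ ?_
    simp only [Fin.consEquiv_apply, Fin.prod_univ_succ, Fin.cons_zero, Fin.cons_succ,
      ← Fin.succ_last, Fin.castSucc_zero, ← Fin.succ_castSucc]
    ring

lemma tensorPowerTrace_finRotate (A : Matrix ι ι R) (k : ℕ) :
    tensorPowerTrace A (finRotate (k + 1)) = (A ^ (k + 1)).trace := by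
  rw [pow_succ', ← sum_walk_eq_trace_mul_pow]
  refine sum_congr rfl fun j _ ↦ ?_
  rw [Fin.prod_univ_castSucc, finRotate_last, mul_comm]
  simp

lemma exists_equiv_finRotate_of_isCycleOn_univ {α : Type*} [Fintype α] {σ : Perm α} {k : ℕ}
    (hσ : σ.IsCycleOn Set.univ) (hk : Fintype.card α = k + 1) :
    ∃ e : Fin (k + 1) ≃ α, ∀ i, e (finRotate (k + 1) i) = σ (e i) := by
  obtain ⟨a⟩ : Nonempty α := Fintype.card_pos_iff.1 (by omega)
  have pow_eq_pow_iff (m n : ℕ) : (σ ^ m) a = (σ ^ n) a ↔ m ≡ n [MOD k + 1] := by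
    rw [← hk]
    exact IsCycleOn.pow_apply_eq_pow_apply (s := univ) (by simpa using hσ) (mem_univ a)
  let orbit (i : Fin (k + 1)) : α := (σ ^ (i : ℕ)) a
  have orbit_injective : Function.Injective orbit := fun i j hij ↦
    Fin.ext (((pow_eq_pow_iff i j).1 hij).eq_of_lt_of_lt i.2 j.2)
  have orbit_bijective : Function.Bijective orbit :=
    (Fintype.bijective_iff_injective_and_card orbit).2 ⟨orbit_injective, by simp [hk]⟩
  refine ⟨Equiv.ofBijective orbit orbit_bijective, fun i ↦ ?_⟩
  calc (σ ^ (finRotate (k + 1) i : ℕ)) a = (σ ^ (i + 1 : ℕ)) a := by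
        rw [pow_eq_pow_iff, finRotate_apply, Fin.val_add, Fin.val_one']
        simp [Nat.ModEq]
    _ = σ ((σ ^ (i : ℕ)) a) := by rw [pow_succ', mul_apply]

lemma tensorPowerTrace_of_isCycleOn_univ {α : Type*} [Fintype α] [DecidableEq α]
    [Nonempty α] (A : Matrix ι ι R) {σ : Perm α} (hσ : σ.IsCycleOn Set.univ) :
    tensorPowerTrace A σ = (A ^ Fintype.card α).trace := by
  obtain ⟨k, hk⟩ := Nat.exists_eq_succ_of_ne_zero (Fintype.card_ne_zero (α := α))
  obtain ⟨e, he⟩ := exists_equiv_finRotate_of_isCycleOn_univ hσ hk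
  rw [← tensorPowerTrace_congr A e he, tensorPowerTrace_finRotate, hk]

end Cycle

section CycleOf

variable {α : Type*} [Fintype α] [DecidableEq α]

/-- The restriction of `σ` to the fiber of `σ.cycleOf` over `c`: for a cycle `c` of `σ` this is
the support of `c`, for `c = 1` the set of fixed points of `σ`, and otherwise it is empty. -/
def cycleOfFiberPerm (σ c : Perm α) : Perm {x // σ.cycleOf x = c} :=
  σ.subtypePerm fun x ↦ by rw [cycleOf_self_apply]

lemma tensorPowerTrace_cycleOfFiberPerm_one (A : Matrix ι ι R) (σ : Perm α) :
    tensorPowerTrace A (cycleOfFiberPerm σ 1) = A.trace ^ (Fintype.card α - #σ.support) := by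
  have hone : cycleOfFiberPerm σ 1 = 1 :=
    Equiv.ext fun x ↦ Subtype.ext ((cycleOf_eq_one_iff σ).1 x.2)
  have hcard : Fintype.card {x // σ.cycleOf x = 1} = Fintype.card α - #σ.support := by
    rw [← card_compl, Fintype.card_subtype]
    congr 1
    ext x
    simp
  rw [hone, tensorPowerTrace_one, hcard]

lemma tensorPowerTrace_cycleOfFiberPerm_of_mem [DecidableEq ι] (A : Matrix ι ι R) {σ c : Perm α}
    (hc : c ∈ σ.cycleFactorsFinset) :
    tensorPowerTrace A (cycleOfFiberPerm σ c) = (A ^ #c.support).trace := by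
  have hfiber (x : α) : σ.cycleOf x = c ↔ x ∈ c.support :=
    eq_comm.trans (eq_cycleOf_of_mem_cycleFactorsFinset_iff σ c hc x)
  have hcycle : σ.IsCycleOn {x | σ.cycleOf x = c} := by
    rw [show {x | σ.cycleOf x = c} = ↑c.support from Set.ext hfiber]
    exact isCycleOn_support_of_mem_cycleFactorsFinset hc
  have hcard : Fintype.card {x // σ.cycleOf x = c} = #c.support := by
    simp only [hfiber, Fintype.card_coe]
  obtain ⟨x, hx⟩ := (mem_cycleFactorsFinset_iff.1 hc).1.nonempty_support
  have : Nonempty {x // σ.cycleOf x = c} := ⟨x, (hfiber x).2 hx⟩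
  rw [← hcard]
  exact tensorPowerTrace_of_isCycleOn_univ A hcycle.subtypePerm

lemma tensorPowerTrace_eq_prod_cycleFactorsFinset (A : Matrix ι ι R) (σ : Perm α) :
    tensorPowerTrace A σ = tensorPowerTrace A (cycleOfFiberPerm σ 1) *
      ∏ c ∈ σ.cycleFactorsFinset, tensorPowerTrace A (cycleOfFiberPerm σ c) := by
  have hone : 1 ∉ σ.cycleFactorsFinset := fun h ↦ (mem_cycleFactorsFinset_iff.1 h).1.ne_one rfl
  rw [tensorPowerTrace_eq_prod_fiber A σ σ.cycleOf (cycleOf_self_apply σ),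
    ← prod_insert (f := fun c ↦ tensorPowerTrace A (cycleOfFiberPerm σ c)) hone]
  refine (prod_subset (subset_univ _) fun c _ hc ↦ ?_).symm
  have : IsEmpty {x // σ.cycleOf x = c} := by
    refine ⟨fun ⟨x, hx⟩ ↦ hc ?_⟩
    rw [mem_insert, ← hx, or_iff_not_imp_left]
    exact cycleOf_ne_one_iff_mem_cycleFactorsFinset.1
  exact tensorPowerTrace_of_isEmpty A _

end CycleOf

end TensorPowerTrace

theorem trace_tensor_power_perm_general {R : Type*} [CommSemiring R] {ι : Type*} [Fintype ι]
    [DecidableEq ι] {α : Type*} [Fintype α] [DecidableEq α] (A : Matrix ι ι R) (σ : Perm α) :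
    ∑ j : α → ι, ∏ i : α, A (j (σ i)) (j i) =
      A.trace ^ (Fintype.card α - #σ.support) *
        (σ.cycleType.map fun k ↦ (A ^ k).trace).prod :=
  calc
    tensorPowerTrace A σ = tensorPowerTrace A (cycleOfFiberPerm σ 1) *
          ∏ c ∈ σ.cycleFactorsFinset, tensorPowerTrace A (cycleOfFiberPerm σ c) :=
        tensorPowerTrace_eq_prod_cycleFactorsFinset A σ
    _ = A.trace ^ (Fintype.card α - #σ.support) *
          ∏ c ∈ σ.cycleFactorsFinset, (A ^ #c.support).trace := by
        rw [tensorPowerTrace_cycleOfFiberPerm_one,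
          prod_congr rfl fun c hc ↦ tensorPowerTrace_cycleOfFiberPerm_of_mem A hc]
    _ = A.trace ^ (Fintype.card α - #σ.support) *
          (σ.cycleType.map fun k ↦ (A ^ k).trace).prod := by
        rw [cycleType_def, Multiset.map_map]
        rfl

/-- The trace of the wreath-product element `(σ; g, …, g)` acting on the `n`-th tensor
power of a representation where `g` acts by the matrix `A` equals the product over the
cycles of `σ` of the traces of the corresponding powers of `A`, with fixed points of `σ`
each contributing a factor `Matrix.trace A`. -/
theorem trace_tensor_power_perm {R : Type*} [CommRing R] {ι : Type*} [Fintype ι]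
    [DecidableEq ι] (A : Matrix ι ι R) (n : ℕ) (σ : Equiv.Perm (Fin n)) :
    ∑ j : Fin n → ι, ∏ i : Fin n, A (j (σ i)) (j i) =
      Matrix.trace A ^ (n - σ.support.card) *
        ((σ.cycleType).map fun k => Matrix.trace (A ^ k)).prod := by
  simpa only [Fintype.card_fin] using trace_tensor_power_perm_general A σ
end

section
/- Let K be a field, V a finite-dimensional K-vector space, n ≥ 1, and f : Fin n → (V →ₗ[K] V) a family of linear endomorphisms. Let T be the linear endomorphism of the n-th tensor power ⨂[K]^n V determined on pure tensors by T (v₀ ⊗ v₁ ⊗ ⋯ ⊗ v_{n-1}) = (f_{n-1} v_{n-1}) ⊗ (f₀ v₀) ⊗ (f₁ v₁) ⊗ ⋯ ⊗ (f_{n-2} v_{n-2}); that is, T applies f_i in the i-th slot and then cyclically shifts the tensor slots by one (T is the composite of PiTensorProduct.map f with the reindexing isomorphism of ⨂[K]^n V induced by the cyclic rotation i ↦ i + 1 of Fin n). Then LinearMap.trace K _ T = LinearMap.trace K V (f_{n-1} ∘ₗ f_{n-2} ∘ₗ ⋯ ∘ₗ f₀), the trace of the composite of the f_i taken along the cycle.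 -/
/-!
In the basis of the tensor power induced by a basis of `V`, the diagonal entry of the shifted map at
an index `p` is `∏ i, M i (p (i + 1)) (p i)`, where `M i` is the matrix of `f i` and `i + 1` is
taken cyclically. Thus the trace of the shifted map is the sum over all closed walks `p` of the
product of the entries of the `M i` along `p`, which is also the trace of `M n * ⋯ * M 0`.
-/

open scoped TensorProduct

section Matrix

variable {R ι : Type*} [CommSemiring R] [Fintype ι] [DecidableEq ι]

-- The extra factor `A` closes up the walk; in the induction it absorbs the first step.
theorem matrix_trace_mul_prod_reverse_ofFn (A : Matrix ι ι R) {n : ℕ}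
    (M : Fin n → Matrix ι ι R) :
    (A * (List.ofFn M).reverse.prod).trace =
      ∑ p : Fin (n + 1) → ι,
        A (p 0) (p (Fin.last n)) * ∏ i, M i (p i.succ) (p i.castSucc) := by
  induction n generalizing A with
  | zero =>
    rw [← (Equiv.funUnique (Fin 1) ι).symm.sum_comp]
    simp [Matrix.trace]
  | succ n ih =>
    calc (A * (List.ofFn M).reverse.prod).trace
        = ((M 0 * A) * (List.ofFn fun i : Fin n => M i.succ).reverse.prod).trace := by
          rw [List.ofFn_succ, List.reverse_cons, List.prod_append, List.prod_singleton,
            ← mul_assoc, Matrix.trace_mul_comm, mul_assoc]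
      _ = ∑ p : Fin (n + 1) → ι, ∑ a, A a (p (Fin.last n)) *
            (M 0 (p 0) a * ∏ i : Fin n, M i.succ (p i.succ) (p i.castSucc)) := by
          rw [ih]
          simp only [Matrix.mul_apply, Finset.sum_mul, mul_left_comm, mul_assoc]
      _ = ∑ p : Fin (n + 2) → ι, A (p 0) (p (Fin.last (n + 1))) *
            ∏ i, M i (p i.succ) (p i.castSucc) := by
          rw [Finset.sum_comm, ← (Fin.consEquiv fun _ => ι).sum_comp, Fintype.sum_prod_type]
          simp [Fin.consEquiv, Fin.prod_univ_succ, ← Fin.succ_last]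

theorem matrix_trace_prod_reverse_ofFn {n : ℕ} (M : Fin (n + 1) → Matrix ι ι R) :
    (List.ofFn M).reverse.prod.trace =
      ∑ p : Fin (n + 1) → ι, ∏ i, M i (p (finRotate (n + 1) i)) (p i) := by
  rw [List.ofFn_succ', List.concat_eq_append, List.reverse_concat, List.prod_cons,
    matrix_trace_mul_prod_reverse_ofFn]
  refine Finset.sum_congr rfl fun p _ => ?_
  simp [Fin.prod_univ_castSucc, mul_comm]

end Matrix

section LinearMap

variable {R V ι : Type*} [CommSemiring R] [AddCommMonoid V] [Module R V]
  [Fintype ι] [DecidableEq ι]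

theorem toMatrix_list_prod (b : Module.Basis ι R V) (l : List (Module.End R V)) :
    LinearMap.toMatrix b b l.prod = (l.map (LinearMap.toMatrix b b)).prod :=
  map_list_prod (LinearMap.toMatrixAlgEquiv b) l

theorem trace_reindex_comp_map {κ : Type*} [Fintype κ] [DecidableEq κ] (b : Module.Basis ι R V)
    (σ : Equiv.Perm κ) (f : κ → Module.End R V) :
    LinearMap.trace R (⨂[R] _ : κ, V)
        ((PiTensorProduct.reindex R (fun _ => V) σ).toLinearMap ∘ₗ PiTensorProduct.map f) =
      ∑ p : κ → ι, ∏ k, LinearMap.toMatrix b b (f k) (p (σ k)) (p k) := by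
  rw [LinearMap.trace_eq_matrix_trace R (Basis.piTensorProduct fun _ : κ => b), Matrix.trace]
  refine Finset.sum_congr rfl fun p _ => ?_
  rw [Matrix.diag_apply, LinearMap.toMatrix_apply, Basis.piTensorProduct_apply,
    LinearMap.comp_apply, PiTensorProduct.map_tprod, LinearEquiv.coe_coe,
    PiTensorProduct.reindex_tprod, Basis.piTensorProduct_repr_tprod_apply, ← Equiv.prod_comp σ]
  simp only [Equiv.symm_apply_apply, LinearMap.toMatrix_apply]

end LinearMap

theorem trace_cyclic_shift_tensor_power_general (R : Type*) [CommSemiring R] (V : Type*)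
    [AddCommMonoid V] [Module R V] [Module.Free R V] [Module.Finite R V]
    (n : ℕ) (f : Fin (n + 1) → Module.End R V) :
    LinearMap.trace R (⨂[R] _ : Fin (n + 1), V)
        ((PiTensorProduct.reindex R (fun _ : Fin (n + 1) => V)
            (finRotate (n + 1))).toLinearMap ∘ₗ
          PiTensorProduct.map fun i => f i) =
      LinearMap.trace R V ((List.ofFn f).reverse.prod) := by
  classical
  let b := Module.Free.chooseBasis R V
  rw [trace_reindex_comp_map b,
    ← matrix_trace_prod_reverse_ofFn fun i => LinearMap.toMatrix b b (f i),
    LinearMap.trace_eq_matrix_trace R b, toMatrix_list_prod, List.map_reverse, List.map_ofFn]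
  rfl

/-- Let `f : Fin (n+1) → End V` be a family of endomorphisms of a finite-dimensional
vector space, and let `T` be the endomorphism of the `(n+1)`-st tensor power of `V`
that applies `f i` in the `i`-th slot and then cyclically shifts the tensor slots by
one (so `T (v₀ ⊗ ⋯ ⊗ vₙ) = fₙ vₙ ⊗ f₀ v₀ ⊗ ⋯ ⊗ f_{n-1} v_{n-1}`).  Then the trace of
`T` equals the trace of the composite of the `f i` taken along the cycle. -/
theorem trace_cyclic_shift_tensor_power (K : Type*) [Field K] (V : Type*)
    [AddCommGroup V] [Module K V] [FiniteDimensional K V] (n : ℕ)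
    (f : Fin (n + 1) → Module.End K V) :
    LinearMap.trace K (⨂[K] _ : Fin (n + 1), V)
        ((PiTensorProduct.reindex K (fun _ : Fin (n + 1) => V)
            (finRotate (n + 1))).toLinearMap ∘ₗ
          PiTensorProduct.map fun i => f i) =
      LinearMap.trace K V ((List.ofFn f).reverse.prod) :=
  trace_cyclic_shift_tensor_power_general K V n f
end

section
/- Let φ : G →* H be any group homomorphism. Let Δ : H →* H × H be the diagonal homomorphism h ↦ (h, h) and let μ : H × G →* H × H be MonoidHom.prodMap (MonoidHom.id H) φ, i.e. μ(t, u) = (t, φ u). In the comma category Comma (B Δ) (B μ), objects are elements (a, b) of H × H and a morphism (a, b) ⟶ (a', b') is a pair (s, (t, u)) ∈ H × (H × G) with a' = t * a * s⁻¹ and b' = φ(u) * b * s⁻¹. Then the functor SingleObj G ⥤ Comma (B Δ) (B μ) sending the unique object to the object (1, 1) and the arrow g to the morphism (φ g, (φ g, g)) is an equivalence of categories. (This exhibits the square underlying the Frobenius axiom as a homotopy pullback square of groupoids.) -/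
/-!
A commutative square of groups `α ∘ f = β ∘ g`, with source `P` and target `M`, is a homotopy
pullback exactly when `P` is the pullback of `α` and `β` and every element of `M` is a product of
a value of `β` and a value of `α`: these are full faithfulness and essential surjectivity of the
comparison functor.

For the diagonal of `H` and `id × φ`, the pullback consists of the triples `(φ u, (φ u, u))`, and
`(a, b) = (a * b⁻¹, φ 1) * (b, b)`.
-/

open CategoryTheory

variable {G H : Type*} [Group G] [Group H]

/-- The comparison functor from `SingleObj G` to the homotopy pullback (comma category)
of the diagonal `B Δ : SingleObj H ⥤ SingleObj (H × H)` and
`B (id × φ) : SingleObj (H × G) ⥤ SingleObj (H × H)`: it sends the unique object to the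
comma object `(1, 1)` and the arrow `g` to the morphism `(φ g, (φ g, g))`. -/
def frobeniusComparison (φ : G →* H) :
    SingleObj G ⥤
      Comma (SingleObj.mapHom H (H × H) ((MonoidHom.id H).prod (MonoidHom.id H)))
        (SingleObj.mapHom (H × G) (H × H) ((MonoidHom.id H).prodMap φ)) where
  obj _ :=
    { left := SingleObj.star H
      right := SingleObj.star (H × G)
      hom := ((1 : H), (1 : H)) }
  map g :=
    { left := φ g
      right := (φ g, g)
      w := by
        show (((1 : H), (1 : H)) : H × H) * (φ g, φ g) = (φ g, φ g) * ((1 : H), (1 : H))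
        simp }
  map_id _ := by
    apply CommaMorphism.ext
    · show φ 1 = 1
      simp
    · show ((φ 1, (1 : G)) : H × G) = (1, 1)
      simp
  map_comp f g := by
    apply CommaMorphism.ext
    · show φ (g * f) = φ g * φ f
      exact map_mul φ g f
    · show ((φ (g * f), g * f) : H × G) = ((φ g, g) : H × G) * ((φ f, f) : H × G)
      rw [Prod.mk_mul_mk, map_mul]

section CommaLift

variable {P K L M : Type*} [Monoid P] [Monoid K] [Monoid L] [Monoid M]
  {f : P →* K} {g : P →* L} {α : K →* M} {β : L →* M}

/-- The functor from `SingleObj P` to the comma category of `B α` and `B β` induced by a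
commutative square `α ∘ f = β ∘ g` of monoids, based at the object `1 : M`. When the monoids are
groups, this is the comparison functor from `SingleObj P` to the homotopy pullback. -/
def singleObjCommaLift (w : α.comp f = β.comp g) :
    SingleObj P ⥤ Comma (SingleObj.mapHom K M α) (SingleObj.mapHom L M β) where
  obj _ := ⟨SingleObj.star K, SingleObj.star L, (1 : M)⟩
  map p := ⟨f p, g p, (one_mul _).trans ((DFunLike.congr_fun w p).trans (mul_one _).symm)⟩
  map_id _ := CommaMorphism.ext f.map_one g.map_one
  map_comp p q := CommaMorphism.ext (f.map_mul q p) (g.map_mul q p)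

theorem singleObjComma_hom_mul_map_left
    {X Y : Comma (SingleObj.mapHom K M α) (SingleObj.mapHom L M β)} (m : X ⟶ Y) :
    (Y.hom : M) * α m.left = β m.right * (X.hom : M) :=
  -- Composition in `SingleObj` is multiplication in the opposite order.
  m.w

theorem singleObjCommaLift_faithful_iff (w : α.comp f = β.comp g) :
    (singleObjCommaLift w).Faithful ↔ Function.Injective (f.prod g) := by
  constructor
  · intro _ p q h
    exact (singleObjCommaLift w).map_injective (X := SingleObj.star P) (Y := SingleObj.star P)
      (CommaMorphism.ext (congrArg Prod.fst h) (congrArg Prod.snd h))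
  · intro hinj
    exact ⟨fun h => hinj (Prod.ext (congrArg CommaMorphism.left h)
      (congrArg CommaMorphism.right h))⟩

theorem singleObjCommaLift_full_iff (w : α.comp f = β.comp g) :
    (singleObjCommaLift w).Full ↔ ∀ k l, α k = β l → ∃ p, f p = k ∧ g p = l := by
  constructor
  · intro _ k l h
    let m : (singleObjCommaLift w).obj (SingleObj.star P) ⟶
        (singleObjCommaLift w).obj (SingleObj.star P) :=
      ⟨k, l, (one_mul _).trans (h.trans (mul_one _).symm)⟩
    obtain ⟨p, hp⟩ := (singleObjCommaLift w).map_surjective m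
    exact ⟨p, congrArg CommaMorphism.left hp, congrArg CommaMorphism.right hp⟩
  · intro hsurj
    refine ⟨fun {_ _} m => ?_⟩
    have hm : α m.left = β m.right :=
      (one_mul _).symm.trans ((singleObjComma_hom_mul_map_left m).trans (mul_one _))
    obtain ⟨p, hleft, hright⟩ := hsurj _ _ hm
    exact ⟨p, CommaMorphism.ext hleft hright⟩

theorem singleObjCommaLift_essSurj_iff (w : α.comp f = β.comp g) :
    (singleObjCommaLift w).EssSurj ↔ ∀ m : M, ∃ (k : Kˣ) (l : Lˣ), m * α k = β l := by
  constructor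
  · intro _ m
    let Y : Comma (SingleObj.mapHom K M α) (SingleObj.mapHom L M β) :=
      ⟨SingleObj.star K, SingleObj.star L, m⟩
    let e := (singleObjCommaLift w).objObjPreimageIso Y
    exact ⟨(Units.toAut K).symm (Comma.leftIso e), (Units.toAut L).symm (Comma.rightIso e),
      (singleObjComma_hom_mul_map_left e.hom).trans (mul_one _)⟩
  · intro hfactor
    refine ⟨fun Y => ?_⟩
    obtain ⟨k, l, h⟩ := hfactor Y.hom
    exact ⟨SingleObj.star P,
      ⟨Comma.isoMk (Units.toAut K k) (Units.toAut L l) (h.trans (mul_one _).symm)⟩⟩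

theorem singleObjCommaLift_isEquivalence_iff (w : α.comp f = β.comp g) :
    (singleObjCommaLift w).IsEquivalence ↔
      Function.Injective (f.prod g) ∧ (∀ k l, α k = β l → ∃ p, f p = k ∧ g p = l) ∧
        ∀ m : M, ∃ (k : Kˣ) (l : Lˣ), m * α k = β l := by
  rw [← singleObjCommaLift_faithful_iff w, ← singleObjCommaLift_full_iff w,
    ← singleObjCommaLift_essSurj_iff w]
  exact ⟨fun _ => ⟨inferInstance, inferInstance, inferInstance⟩, fun ⟨_, _, _⟩ => { }⟩

end CommaLift

theorem diagonal_comp_eq_id_prodMap_comp_graph {N K : Type*} [Monoid N] [Monoid K] (φ : N →* K) :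
    ((MonoidHom.id K).prod (MonoidHom.id K)).comp φ =
      ((MonoidHom.id K).prodMap φ).comp (φ.prod (MonoidHom.id N)) :=
  rfl

theorem frobeniusComparison_eq_singleObjCommaLift (φ : G →* H) :
    frobeniusComparison φ = singleObjCommaLift (diagonal_comp_eq_id_prodMap_comp_graph φ) :=
  rfl

theorem frobeniusComparison_isEquivalence_general {N K : Type*} [Monoid N] [Group K]
    (φ : N →* K) :
    (singleObjCommaLift (diagonal_comp_eq_id_prodMap_comp_graph φ)).IsEquivalence := by
  refine (singleObjCommaLift_isEquivalence_iff _).mpr ⟨?injective, ?surjective, ?factorization⟩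
  case injective => exact fun _ _ h => congrArg (fun x => x.2.2) h
  case surjective =>
    rintro s ⟨t, u⟩ h
    obtain ⟨hst, hsu⟩ : s = t ∧ s = φ u := Prod.mk.inj h
    exact ⟨u, hsu.symm, Prod.ext (hsu.symm.trans hst) rfl⟩
  case factorization =>
    rintro ⟨a, b⟩
    refine ⟨toUnits b⁻¹, MulEquiv.prodUnits.symm (toUnits (a * b⁻¹), 1), ?_⟩
    change (a * b⁻¹, b * b⁻¹) = (a * b⁻¹, φ 1)
    rw [mul_inv_cancel, map_one]

/-- The square underlying the Frobenius axiom is a homotopy pullback square: for any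
group homomorphism `φ : G →* H`, the comparison functor from `SingleObj G` to the
homotopy fibered product of the diagonal `H → H × H` and `id × φ : H × G → H × H`
is an equivalence of categories. -/
theorem frobeniusComparison_isEquivalence (φ : G →* H) :
    (frobeniusComparison φ).IsEquivalence := by
  rw [frobeniusComparison_eq_singleObjCommaLift]
  exact frobeniusComparison_isEquivalence_general φ
end

section
/- Let φ : G →* H be an injective group homomorphism, and let G act on H by g • h = φ(g) * h. Let pt : Discrete PUnit ⥤ SingleObj H be the functor picking out the unique object of SingleObj H. Then the comma category Comma pt (B φ) — whose objects are the elements h of H and whose morphisms h ⟶ h' are the elements g ∈ G with h' = φ(g) * h — is equivalent to the discrete category on the orbit space of this G-action on H (equivalently, the set of cosets φ(G)h). (The homotopy fiber of B φ over the basepoint of SingleObj H is the discrete groupoid of cosets.) -/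
/-!
For every `φ`, the homotopy fiber of `B φ` is the category of elements of the functor
`Hom(star, B φ -)`, which is `H` with the left translation action of `G`; so the fiber is the
action groupoid of `G` on `H`. The functor from an action groupoid to its orbit space is always
full and surjective on objects, and it is faithful when the action is free, as left translation is
for injective `φ`.
-/

open CategoryTheory

/-- The action of `G` on `H` through a homomorphism `φ : G →* H` by left translation:
`g • h = φ g * h`. -/
def leftTranslationAction {G H : Type*} [Group G] [Group H] (φ : G →* H) :
    MulAction G H where
  smul g h := φ g * h
  one_smul h := by show φ 1 * h = h; simp
  mul_smul a b h := by show φ (a * b) * h = φ a * (φ b * h); simp [mul_assoc]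

universe w v₁ v₂ u₁ u₂

section ActionGroupoid

variable (G : Type*) [Group G] (X : Type*) [MulAction G X]

variable {G X} in
lemma nonempty_hom_iff_orbitRel_mk_eq {x y : ActionCategory G X} :
    Nonempty (x ⟶ y) ↔
      (Quotient.mk _ x.back : MulAction.orbitRel.Quotient G X) = Quotient.mk _ y.back := by
  rw [eq_comm, Quotient.eq]
  exact nonempty_subtype

/-- The functor from the action groupoid of `G` on `X` to the discrete category on the orbit space,
sending a point to its orbit. -/
def orbitFunctor : ActionCategory G X ⥤ Discrete (MulAction.orbitRel.Quotient G X) where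
  obj x := ⟨Quotient.mk _ x.back⟩
  map f := Discrete.eqToHom (nonempty_hom_iff_orbitRel_mk_eq.1 ⟨f⟩)

instance orbitFunctor_full : (orbitFunctor G X).Full where
  map_surjective {_ _} f := by
    obtain ⟨g⟩ := nonempty_hom_iff_orbitRel_mk_eq.2 (Discrete.eq_of_hom f)
    exact ⟨g, Subsingleton.elim _ _⟩

instance orbitFunctor_essSurj : (orbitFunctor G X).EssSurj where
  mem_essImage := by
    rintro ⟨⟨x⟩⟩
    exact ⟨(x : ActionCategory G X), ⟨Iso.refl _⟩⟩

instance orbitFunctor_faithful [IsCancelSMul G X] : (orbitFunctor G X).Faithful where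
  map_injective {x _} f g _ :=
    Subtype.ext (IsCancelSMul.right_cancel f.val g.val x.back (f.property.trans g.property.symm))

instance orbitFunctor_isEquivalence [IsCancelSMul G X] : (orbitFunctor G X).IsEquivalence where

end ActionGroupoid

section CommaFromPUnit

variable {C : Type u₁} [Category.{v₁} C] {D : Type u₂} [Category.{v₂} D]

/-- The comma category of an object `d` and a functor `F` is the category of elements of
`Hom(d, F -)`. This is not stated for `StructuredArrow d F` because there the point lives in
universe `0`, while here its universe `w` is arbitrary. -/
def commaFromPUnitEquivElements (d : D) (F : C ⥤ D) :
    Comma (Functor.fromPUnit.{w} d) F ≌ (F ⋙ coyoneda.obj (Opposite.op d)).Elements where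
  functor :=
    { obj := fun x => ⟨x.right, x.hom⟩
      map := fun f => ⟨f.right, f.w.symm.trans (Category.id_comp _)⟩ }
  inverse :=
    { obj := fun x => ⟨⟨PUnit.unit⟩, x.1, x.2⟩
      map := fun f => ⟨𝟙 _, f.val, (Category.id_comp _).trans f.property.symm⟩ }
  unitIso := Iso.refl _
  counitIso := Iso.refl _
  functor_unitIso_comp := fun _ => Category.comp_id _

end CommaFromPUnit

section LeftTranslation

variable {G H : Type*} [Group G] [Group H] (φ : G →* H)

/-- The homotopy fiber of `B φ` over the basepoint is the action groupoid of `G` acting on `H` by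
left translation through `φ`. -/
def commaPointEquivActionCategory :
    letI := leftTranslationAction φ
    Comma (Functor.fromPUnit.{w} (SingleObj.star H)) (SingleObj.mapHom G H φ) ≌
      ActionCategory G H :=
  -- `Hom(star, B φ -)` and `actionAsFunctor G H` agree definitionally.
  commaFromPUnitEquivElements (SingleObj.star H) (SingleObj.mapHom G H φ)

variable {φ}

lemma isCancelSMul_leftTranslationAction (hφ : Function.Injective φ) :
    letI := leftTranslationAction φ
    IsCancelSMul G H :=
  letI := leftTranslationAction φ
  isCancelSMul_iff_eq_one_of_smul_eq.2 fun g _ h =>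
    (injective_iff_map_eq_one φ).1 hφ g (mul_eq_right.1 h)

end LeftTranslation

/-- For an injective homomorphism `φ : G →* H`, the homotopy fiber of
`B φ : SingleObj G ⥤ SingleObj H` over the basepoint of `SingleObj H` (realized as the
comma category of the functor from the point and `B φ`) is equivalent to the discrete
groupoid on the orbit space of the action `g • h = φ g * h` of `G` on `H`, i.e. on the
set of cosets `φ(G)h`. -/
theorem comma_point_equiv_discrete_orbits {G H : Type*} [Group G] [Group H]
    (φ : G →* H) (hφ : Function.Injective φ) :
    letI := leftTranslationAction φ
    Nonempty (Comma (Functor.fromPUnit (SingleObj.star H)) (SingleObj.mapHom G H φ) ≌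
      Discrete (MulAction.orbitRel.Quotient G H)) := by
  let := leftTranslationAction φ
  have : IsCancelSMul G H := isCancelSMul_leftTranslationAction hφ
  exact ⟨(commaPointEquivActionCategory φ).trans (orbitFunctor G H).asEquivalence⟩
end

section
/- Let β : G →* H be a surjective group homomorphism and K a subgroup of H, with inclusion ι_K : K →* H. Then the comma category Comma (B ι_K) (B β) — whose objects are the elements h of H and whose morphisms h ⟶ h' are pairs (k, g) ∈ K × G with h' = β(g) * h * k⁻¹ — is equivalent to SingleObj (K.comap β), the one-object groupoid on the preimage subgroup β⁻¹(K) ≤ G. (The square formed by β : G ↠ H, the inclusion β⁻¹(K) ↪ G, the restriction β⁻¹(K) ↠ K, and the inclusion K ↪ H is a homotopy pullback square of groupoids.) -/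
/-!
The strict fiber product of `α : L →* H` and `β : G →* H` is the endomorphism monoid of the object
`1 : H` of the comma category, because the square of an endomorphism `(l, g)` reads
`1 * α l = β g * 1`. A pair of units `(l⁻¹, g)` is an isomorphism `1 ≅ h` as soon as
`h = β g * α l`, so if every `h` factors in this way then `1` is the only object up to isomorphism.
For the inclusion of `K`, a pair `(k, g)` in the fiber product is determined by `g ∈ β⁻¹(K)`, and
surjectivity of `β` provides the factorization with `l = 1`.
-/

open CategoryTheory

section FiberProduct

variable {L G H : Type*} [Monoid L] [Monoid G] [Monoid H]

/-- The strict fiber product `L ×_H G` of two monoid homomorphisms: the pairs `(l, g)` with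
`α l = β g`. It is the one-object candidate for their homotopy fiber product. -/
abbrev fiberProduct (α : L →* H) (β : G →* H) : Submonoid (L × G) :=
  (α.comp (MonoidHom.fst L G)).eqLocusM (β.comp (MonoidHom.snd L G))

/-- The comparison functor from the strict fiber product to the homotopy fiber product. It sends
the unique object to `1 : H` and is the identity on pairs. -/
def fiberProductToComma (α : L →* H) (β : G →* H) :
    SingleObj (fiberProduct α β) ⥤
      Comma (SingleObj.mapHom L H α) (SingleObj.mapHom G H β) where
  obj _ := { left := SingleObj.star L, right := SingleObj.star G, hom := (1 : H) }
  map x :=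
    { left := x.1.1
      right := x.1.2
      w := (one_mul (α x.1.1)).trans (x.2.trans (mul_one (β x.1.2)).symm) }

instance (α : L →* H) (β : G →* H) : (fiberProductToComma α β).Faithful where
  map_injective h :=
    Subtype.ext (Prod.ext (congrArg CommaMorphism.left h) (congrArg CommaMorphism.right h))

instance (α : L →* H) (β : G →* H) : (fiberProductToComma α β).Full where
  map_surjective f := by
    have hw : (1 : H) * α f.left = β f.right * 1 := f.w
    exact ⟨⟨(f.left, f.right), by rwa [one_mul, mul_one] at hw⟩, rfl⟩

lemma fiberProductToComma_essSurj (α : L →* H) (β : G →* H)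
    (hfactor : ∀ h : H, ∃ (g : Gˣ) (l : Lˣ), β g * α l = h) :
    (fiberProductToComma α β).EssSurj where
  mem_essImage Y := by
    obtain ⟨g, l, hgl⟩ := hfactor Y.hom
    have hw : (show H from Y.hom) * α ↑l⁻¹ = β g * 1 := by
      rw [← hgl, mul_assoc, ← map_mul, Units.mul_inv, map_one]
    exact ⟨SingleObj.star _, ⟨Comma.isoMk (Units.toAut L l⁻¹) (Units.toAut G g) hw⟩⟩

/-- The preimage `β⁻¹(K)` is the strict fiber product of the inclusion of `K` and `β`: the element
`g` corresponds to the pair `(β g, g)`. -/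
def comapEquivFiberProduct (β : G →* H) (K : Submonoid H) :
    K.comap β ≃* fiberProduct K.subtype β where
  toFun g := ⟨(⟨β g, g.2⟩, g), rfl⟩
  invFun x := ⟨x.1.2, Submonoid.mem_comap.mpr ((x.2 : (x.1.1 : H) = β x.1.2) ▸ x.1.1.2)⟩
  left_inv _ := rfl
  right_inv x := Subtype.ext (Prod.ext (Subtype.ext x.2.symm) rfl)
  map_mul' g g' := Subtype.ext (Prod.ext (Subtype.ext (map_mul β g.1 g'.1)) rfl)

theorem comma_inclusion_surjection_equiv_comap_general (α : L →* H) (β : G →* H)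
    (hfactor : ∀ h : H, ∃ (g : Gˣ) (l : Lˣ), β g * α l = h) :
    Nonempty (Comma (SingleObj.mapHom L H α) (SingleObj.mapHom G H β) ≌
      SingleObj (fiberProduct α β)) := by
  have := fiberProductToComma_essSurj α β hfactor
  have : (fiberProductToComma α β).IsEquivalence := {}
  exact ⟨(fiberProductToComma α β).asEquivalence.symm⟩

end FiberProduct

/-- For a surjective homomorphism `β : G ↠ H` and a subgroup `K ≤ H`, the homotopy
fibered product of `B ι_K : SingleObj K ⥤ SingleObj H` and `B β : SingleObj G ⥤
SingleObj H` (realized as the comma category `Comma (B ι_K) (B β)`) is equivalent to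
the one-object groupoid on the preimage subgroup `β⁻¹(K) ≤ G`. -/
theorem comma_inclusion_surjection_equiv_comap {G H : Type*} [Group G] [Group H]
    (β : G →* H) (hβ : Function.Surjective β) (K : Subgroup H) :
    Nonempty (Comma (SingleObj.mapHom K H K.subtype) (SingleObj.mapHom G H β) ≌
      SingleObj ↥(K.comap β)) := by
  have hfactor (h : H) : ∃ (g : Gˣ) (k : Kˣ), β g * K.subtype k = h :=
    (hβ h).imp' toUnits fun g hg => ⟨1, (mul_one (β g)).trans hg⟩
  exact (comma_inclusion_surjection_equiv_comap_general K.subtype β hfactor).map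
    (·.trans (comapEquivFiberProduct β K.toSubmonoid).symm.toSingleObjEquiv)
end
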